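/- Let σ : ℂ(z) → ℂ(z) be the field automorphism of the field of rational functions over ℂ that applies complex conjugation to all coefficients and substitutes z ↦ 1/z (so σ(R)(z) = conj-coefficients of R evaluated at 1/z), and let ℒ_ℝ(z) denote the fixed subfield {R ∈ ℂ(z) : σ(R) = R}, which contains ℝ. Call an element of ℂ(z) 'Laurent' if it can be written as P(z)/z^m for some polynomial P ∈ ℂ[z] and integer m ≥ 0. For n ≥ 1 set T_n = −i·(z^n − 1)/(z^n + 1) ∈ ℒ_ℝ(z). Then for any subfield K with ℝ ⊆ K ⊆ ℒ_ℝ(z) containing at least one nonconstant Laurent element of ℒ_ℝ(z), either K is the subfield generated over ℝ by T_n for some integer n ≥ 1, or K is the subfield generated over ℝ by a single nonconstant Laurent element B ∈ ℒ_ℝ(z). -/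

import Mathlib

/-- A rational function is 'Laurent' if it can be written as `P(z)/z^m`. -/
def IsLaurentRF (R : RatFunc ℂ) : Prop :=
  ∃ (P : Polynomial ℂ) (m : ℕ),
    R = algebraMap (Polynomial ℂ) (RatFunc ℂ) P / RatFunc.X ^ m

/-- The rational function `T_n = -i·(z^n - 1)/(z^n + 1)`. -/
noncomputable def Tn (n : ℕ) : RatFunc ℂ :=
  RatFunc.C (-Complex.I) * (RatFunc.X ^ n - 1) / (RatFunc.X ^ n + 1)

/-!
Let `E = ℂ·K = K + iK` be the compositum of `ℂ` and `K`; by Lüroth's theorem `E = ℂ(R)`. The ring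
`A = ℂ[X, X⁻¹]` is integrally closed. Write an element `b` of `A ∩ ℂ(R)` as `u(R)/v(R)` in lowest
terms. If `v` has a root `a`, then `u(x) - b v(x)` takes a unit value at `a` and vanishes at `R`, so
`(R - a)⁻¹` is integral over `A`, hence Laurent. Otherwise `b` is a polynomial in `R`, and if
moreover `b` is not constant then `R` is Laurent. In either case `E` has a Laurent generator, so `R`
may be taken to be Laurent.

If some `(R - a)⁻¹` is Laurent, then `R - a` is a unit of `A`, that is a monomial `c X ^ k`, and
`E = ℂ(X ^ |k|) = ℂ(T_|k|)`. Otherwise `σ R`, which lies in `A ∩ E`, is a polynomial in `R`;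
applying `σ`, `R` is a polynomial in `σ R`, so `σ R` is affine in `R`, and some affine function of
`R` is a generator of `E` fixed by `σ`. Finally, if `E = ℂ(S)` with `σ S = S`, then `K = ℝ(S)`,
because the elements of `K + iK` fixed by `σ` are those of `K`.
-/

open Polynomial

open scoped IntermediateField

open IntermediateField (adjoin adjoin_le_iff adjoin_simple_le_iff mem_adjoin_simple_self
  mem_adjoin_simple_iff subset_adjoin)

section FieldExtension

variable {F L : Type*} [Field F] [Field L] [Algebra F L] {x y : L}

theorem mem_adjoin_simple_of_moebius {a b c d : F} (hdet : a * d - b * c ≠ 0)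
    (h : y * (algebraMap F L c * x + algebraMap F L d) =
      algebraMap F L a * x + algebraMap F L b) : y ∈ F⟮x⟯ := by
  have hden : algebraMap F L c * x + algebraMap F L d ≠ 0 := by
    intro h0
    refine hdet ((map_eq_zero (algebraMap F L)).1 ?_)
    simp only [map_sub, map_mul]
    linear_combination algebraMap F L a * h0 + algebraMap F L c * (h - y * h0)
  rw [eq_div_of_mul_eq hden h]
  have hx := mem_adjoin_simple_self F x
  exact div_mem (add_mem (mul_mem (algebraMap_mem F⟮x⟯ a) hx) (algebraMap_mem F⟮x⟯ b))
    (add_mem (mul_mem (algebraMap_mem F⟮x⟯ c) hx) (algebraMap_mem F⟮x⟯ d))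

theorem adjoin_simple_eq_of_moebius {a b c d : F} (hdet : a * d - b * c ≠ 0)
    (h : y * (algebraMap F L c * x + algebraMap F L d) =
      algebraMap F L a * x + algebraMap F L b) : F⟮y⟯ = F⟮x⟯ := by
  have hinv : x * (algebraMap F L c * y + algebraMap F L (-a)) =
      algebraMap F L (-d) * y + algebraMap F L b := by
    simp only [map_neg]
    linear_combination h
  apply le_antisymm <;> rw [adjoin_simple_le_iff]
  · exact mem_adjoin_simple_of_moebius hdet h
  · exact mem_adjoin_simple_of_moebius (by convert hdet using 1; ring) hinv

theorem adjoin_simple_mul_add {a : F} (ha : a ≠ 0) (b : F) :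
    F⟮algebraMap F L a * x + algebraMap F L b⟯ = F⟮x⟯ :=
  adjoin_simple_eq_of_moebius (a := a) (b := b) (c := 0) (d := 1) (by simpa using ha) (by simp)

theorem adjoin_simple_inv_sub {a : F} (ha : x ≠ algebraMap F L a) :
    F⟮(x - algebraMap F L a)⁻¹⟯ = F⟮x⟯ :=
  adjoin_simple_eq_of_moebius (a := 0) (b := 1) (c := 1) (d := -a) (by simp)
    (by simpa [← sub_eq_add_neg] using inv_mul_cancel₀ (sub_ne_zero.2 ha))

theorem exists_eq_algebraMap_of_mem_adjoin_simple (hx : ∃ a : F, x = algebraMap F L a)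
    (hy : y ∈ F⟮x⟯) : ∃ c : F, y = algebraMap F L c := by
  obtain ⟨a, rfl⟩ := hx
  rw [IntermediateField.adjoin_simple_eq_bot_iff.2 (algebraMap_mem ⊥ a)] at hy
  obtain ⟨c, hc⟩ := IntermediateField.mem_bot.1 hy
  exact ⟨c, hc.symm⟩

theorem exists_isCoprime_of_mem_adjoin_simple (h : y ∈ F⟮x⟯) :
    ∃ u v : F[X], IsCoprime u v ∧ aeval x v ≠ 0 ∧ y * aeval x v = aeval x u := by
  classical
  let _ := EuclideanDomain.gcdMonoid F[X]
  obtain ⟨r, s, rfl⟩ := (mem_adjoin_simple_iff F y).1 h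
  by_cases hs : aeval x s = 0
  · exact ⟨0, 1, isCoprime_one_right, by simp, by simp [hs]⟩
  obtain ⟨u, v, hr, hv, huv⟩ := extract_gcd r s
  generalize gcd r s = g at hr hv
  subst hr hv
  rw [map_mul] at hs
  refine ⟨u, v, (gcd_isUnit_iff u v).1 huv, right_ne_zero_of_mul hs, ?_⟩
  rw [map_mul, map_mul, mul_div_mul_left _ _ (left_ne_zero_of_mul hs),
    div_mul_cancel₀ _ (right_ne_zero_of_mul hs)]

theorem exists_affine_of_mem_algebraAdjoin (hx : Transcendental F x)
    (hy : y ∈ Algebra.adjoin F {x}) (hxy : x ∈ Algebra.adjoin F {y}) :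
    ∃ a b : F, y = algebraMap F L a * x + algebraMap F L b := by
  rw [Algebra.adjoin_singleton_eq_range_aeval] at hy hxy
  obtain ⟨p, rfl⟩ := hy
  obtain ⟨q, hq⟩ := hxy
  have hqp : q.comp p = X :=
    transcendental_iff_injective.1 hx (by simpa [aeval_comp] using hq)
  have hp : p.natDegree = 1 :=
    Nat.eq_one_of_mul_eq_one_left (m := q.natDegree) (by rw [← natDegree_comp, hqp, natDegree_X])
  obtain ⟨a, b, rfl⟩ := exists_eq_X_add_C_of_natDegree_le_one hp.le
  exact ⟨a, b, by simp⟩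

theorem exists_eq_add_mul_of_mem_adjoin_simple {i : L} {d : F} (hi : i ^ 2 = algebraMap F L d)
    (hx : x ∈ F⟮i⟯) : ∃ a b : F, x = algebraMap F L a + algebraMap F L b * i := by
  have hmonic : (X ^ 2 - C d : F[X]).Monic := monic_X_pow_sub_C d two_ne_zero
  have hroot : aeval i (X ^ 2 - C d : F[X]) = 0 := by simp [hi]
  rw [← IntermediateField.mem_toSubalgebra,
    IntermediateField.adjoin_simple_toSubalgebra_of_isAlgebraic
      (IsIntegral.isAlgebraic ⟨_, hmonic, hroot⟩), Algebra.adjoin_singleton_eq_range_aeval] at hx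
  obtain ⟨p, rfl⟩ := hx
  have hdeg : (p %ₘ (X ^ 2 - C d)).natDegree < 2 := by
    simpa using natDegree_modByMonic_lt p hmonic (by intro h; simpa using congrArg natDegree h)
  obtain ⟨b, a, hab⟩ := exists_eq_X_add_C_of_natDegree_le_one (Nat.le_of_lt_succ hdeg)
  refine ⟨a, b, ?_⟩
  change aeval i p = _
  rw [← aeval_modByMonic_eq_self_of_root hroot, hab]
  simp [add_comm]

end FieldExtension

section Integrality

section Root

variable {A B : Type*} [CommRing A] [CommRing B] [Algebra A B] {p : A[X]} {x : B}

theorem isIntegral_of_aeval_eq_zero_of_isUnit_leadingCoeff (hp : IsUnit p.leadingCoeff)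
    (hx : aeval x p = 0) : IsIntegral A x := by
  have h := (isIntegral_leadingCoeff_smul p x hx).smul (↑hp.unit⁻¹ : A)
  rwa [smul_smul, IsUnit.val_inv_mul, one_smul] at h

end Root

variable {A L : Type*} [CommRing A] [Field L] [Algebra A L] {x : L}

theorem isIntegral_inv_of_aeval_eq_zero {p : A[X]} (hp : IsUnit (p.coeff 0))
    (hx : aeval x p = 0) : IsIntegral A x⁻¹ := by
  rcases eq_or_ne x 0 with rfl | hx0
  · simpa using isIntegral_zero
  have : Nontrivial A := (algebraMap A L).domain_nontrivial
  let _ := invertibleOfNonzero hx0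
  refine isIntegral_of_aeval_eq_zero_of_isUnit_leadingCoeff (p := p.reverse) ?_ ?_
  · rwa [reverse_leadingCoeff, trailingCoeff,
      natTrailingDegree_eq_zero_of_constantCoeff_ne_zero hp.ne_zero]
  · rw [← invOf_eq_inv]
    exact (eval₂_reverse_eq_zero_iff _ x p).2 hx

theorem isIntegral_inv_sub_of_aeval_eq_zero {p : A[X]} {a : A} (ha : IsUnit (p.eval a))
    (hx : aeval x p = 0) : IsIntegral A (x - algebraMap A L a)⁻¹ := by
  refine isIntegral_inv_of_aeval_eq_zero (p := p.taylor a) (by rwa [taylor_coeff_zero]) ?_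
  simpa [taylor_apply, aeval_comp] using hx

variable {F : Type*} [Field F] [Algebra F L] [Algebra F A] [IsScalarTower F A L] {b : A}

theorem isIntegral_of_mem_algebraAdjoin (hb : algebraMap A L b ∈ Algebra.adjoin F {x})
    (hbF : ¬ ∃ c : F, algebraMap A L b = algebraMap F L c) : IsIntegral A x := by
  have : Nontrivial A := (algebraMap A L).domain_nontrivial
  rw [Algebra.adjoin_singleton_eq_range_aeval] at hb
  obtain ⟨p, hp : aeval x p = _⟩ := hb
  have hpos : 0 < p.degree := by
    by_contra! h
    rw [eq_C_of_degree_le_zero h, aeval_C] at hp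
    exact hbF ⟨_, hp.symm⟩
  have hlt : (C b).degree < (p.map (algebraMap F A)).degree :=
    degree_C_le.trans_lt (by rwa [degree_map])
  refine isIntegral_of_aeval_eq_zero_of_isUnit_leadingCoeff
    (p := p.map (algebraMap F A) - C b) ?_ (by simp [hp])
  rw [leadingCoeff_sub_of_degree_lt hlt, leadingCoeff_map]
  exact (leadingCoeff_ne_zero.2 (ne_zero_of_degree_gt hpos)).isUnit.map _

theorem mem_algebraAdjoin_or_exists_isIntegral_inv_sub [IsAlgClosed F]
    (hb : algebraMap A L b ∈ F⟮x⟯) :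
    algebraMap A L b ∈ Algebra.adjoin F {x} ∨
      ∃ a : F, IsIntegral A (x - algebraMap F L a)⁻¹ := by
  obtain ⟨u, v, huv, hv0, hbuv⟩ := exists_isCoprime_of_mem_adjoin_simple hb
  by_cases hv : v.degree = 0
  · left
    rw [eq_C_of_degree_eq_zero hv, aeval_C] at hbuv hv0
    rw [eq_div_of_mul_eq hv0 hbuv, div_eq_mul_inv, ← map_inv₀]
    exact mul_mem (aeval_mem_adjoin_singleton F x) (algebraMap_mem _ _)
  · right
    obtain ⟨a, ha : v.eval a = 0⟩ := IsAlgClosed.exists_root v hv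
    have hu : u.eval a ≠ 0 := by
      simpa [ha] using aeval_ne_zero_of_isCoprime huv a
    refine ⟨a, ?_⟩
    rw [IsScalarTower.algebraMap_apply F A L]
    refine isIntegral_inv_sub_of_aeval_eq_zero
      (p := u.map (algebraMap F A) - C b * v.map (algebraMap F A)) ?_ (by simp [← hbuv])
    simpa [eval_map_algebraMap, aeval_algebraMap_apply, ha] using hu.isUnit.map (algebraMap F A)

theorem exists_isIntegral_adjoin_simple_eq [IsAlgClosed F] (hb : algebraMap A L b ∈ F⟮x⟯)
    (hbF : ¬ ∃ c : F, algebraMap A L b = algebraMap F L c) :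
    ∃ y : L, IsIntegral A y ∧ F⟮y⟯ = F⟮x⟯ := by
  rcases mem_algebraAdjoin_or_exists_isIntegral_inv_sub hb with hbx | ⟨a, ha⟩
  · exact ⟨x, isIntegral_of_mem_algebraAdjoin hbx hbF, rfl⟩
  · exact ⟨_, ha, adjoin_simple_inv_sub fun h =>
      hbF (exists_eq_algebraMap_of_mem_adjoin_simple ⟨a, h⟩ hb)⟩

end Integrality

section ConjugateLinear

variable {L G : Type*} [Field L] [Algebra ℂ L] [FunLike G L L] [RingHomClass G L L] {σ : G}
  {K : Subfield L} {x y : L}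

theorem exists_eq_add_mul_I_of_mem_adjoin (hK : ∀ r : ℝ, algebraMap ℂ L r ∈ K)
    (hx : x ∈ adjoin ℂ (K : Set L)) :
    ∃ a ∈ K, ∃ b ∈ K, x = a + b * algebraMap ℂ L Complex.I := by
  set i := algebraMap ℂ L Complex.I with hi
  have hi2 : i ^ 2 = algebraMap K L (-1) := by
    rw [hi, ← map_pow, Complex.I_sq, map_neg, map_one, map_neg, map_one]
  have hKi {a : L} (ha : a ∈ K) : a ∈ K⟮i⟯ := K⟮i⟯.algebraMap_mem ⟨a, ha⟩
  have hC (c : ℂ) : algebraMap ℂ L c ∈ K⟮i⟯ := by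
    rw [← Complex.re_add_im c, map_add, map_mul]
    exact add_mem (hKi (hK _)) (mul_mem (hKi (hK _)) (mem_adjoin_simple_self K i))
  have hle : adjoin ℂ (K : Set L) ≤ K⟮i⟯.toSubfield.toIntermediateField hC :=
    adjoin_le_iff.2 fun _ => hKi
  obtain ⟨a, b, rfl⟩ := exists_eq_add_mul_of_mem_adjoin_simple hi2 (hle hx)
  exact ⟨a, a.2, b, b.2, rfl⟩

theorem map_mem_algebraAdjoin_of_conj
    (hσ : ∀ c : ℂ, σ (algebraMap ℂ L c) = algebraMap ℂ L (starRingEnd ℂ c))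
    (hy : y ∈ Algebra.adjoin ℂ {x}) : σ y ∈ Algebra.adjoin ℂ {σ x} := by
  rw [Algebra.adjoin_singleton_eq_range_aeval] at hy ⊢
  obtain ⟨p, rfl⟩ := hy
  exact ⟨p.map (starRingEnd ℂ), (map_aeval_eq_aeval_map (φ := starRingEnd ℂ)
    (ψ := (σ : L →+* L)) (by ext c; simp [hσ]) p x).symm⟩

-- `x + σ x` and `i (x - σ x)` are fixed by `σ`; their leading coefficients `1 + α` and `i (1 - α)`
-- do not both vanish.
theorem exists_map_affine_eq_of_map_eq_affine
    (hσ : ∀ c : ℂ, σ (algebraMap ℂ L c) = algebraMap ℂ L (starRingEnd ℂ c))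
    (hσσ : σ (σ x) = x) {α β : ℂ} (hx : σ x = algebraMap ℂ L α * x + algebraMap ℂ L β) :
    ∃ a b : ℂ, a ≠ 0 ∧ σ (algebraMap ℂ L a * x + algebraMap ℂ L b) =
      algebraMap ℂ L a * x + algebraMap ℂ L b := by
  by_cases hα : 1 + α = 0
  · refine ⟨Complex.I * (1 - α), -Complex.I * β, ?_, ?_⟩
    · rw [show α = -1 by linear_combination hα]
      norm_num
    · have hdiff : algebraMap ℂ L (Complex.I * (1 - α)) * x + algebraMap ℂ L (-Complex.I * β) =
          algebraMap ℂ L Complex.I * (x - σ x) := by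
        rw [hx]
        simp only [map_mul, map_sub, map_one, map_neg]
        ring
      rw [hdiff, map_mul, map_sub, hσσ, hσ, Complex.conj_I, map_neg]
      ring
  · refine ⟨1 + α, β, hα, ?_⟩
    have hsum : algebraMap ℂ L (1 + α) * x + algebraMap ℂ L β = x + σ x := by
      rw [hx, map_add, map_one]
      ring
    rw [hsum, map_add, hσσ, add_comm]

section Fixed

variable (hσ : ∀ c : ℂ, σ (algebraMap ℂ L c) = algebraMap ℂ L (starRingEnd ℂ c))
  (hK : ∀ r : ℝ, algebraMap ℂ L r ∈ K) (hfix : ∀ x ∈ K, σ x = x)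

include hσ hK hfix

theorem map_mem_adjoin_of_conj (hx : x ∈ adjoin ℂ (K : Set L)) : σ x ∈ adjoin ℂ (K : Set L) := by
  obtain ⟨a, ha, b, hb, rfl⟩ := exists_eq_add_mul_I_of_mem_adjoin hK hx
  rw [map_add, map_mul, hσ, hfix a ha, hfix b hb]
  exact add_mem (subset_adjoin ℂ _ ha) (mul_mem (subset_adjoin ℂ _ hb) (algebraMap_mem _ _))

theorem mem_of_mem_adjoin_of_map_eq (hx : x ∈ adjoin ℂ (K : Set L)) (hσx : σ x = x) :
    x ∈ K := by
  obtain ⟨a, ha, b, hb, rfl⟩ := exists_eq_add_mul_I_of_mem_adjoin hK hx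
  have : CharZero L := charZero_of_injective_algebraMap (algebraMap ℂ L).injective
  rw [map_add, map_mul, hσ, hfix a ha, hfix b hb, Complex.conj_I, map_neg] at hσx
  have h2 : (2 : L) * (b * algebraMap ℂ L Complex.I) = 0 := by linear_combination -hσx
  rwa [(mul_eq_zero_iff_left two_ne_zero).1 h2, add_zero]

theorem eq_closure_of_adjoin_eq_adjoin_simple (hσx : σ x = x)
    (hx : adjoin ℂ (K : Set L) = ℂ⟮x⟯) :
    K = Subfield.closure (Set.range (fun r : ℝ => algebraMap ℂ L r) ∪ {x}) := by
  set k := Subfield.closure (Set.range (fun r : ℝ => algebraMap ℂ L r) ∪ {x}) with hk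
  have hkK : k ≤ K := by
    rw [hk, Subfield.closure_le]
    rintro _ (⟨r, rfl⟩ | rfl)
    · exact hK r
    · exact mem_of_mem_adjoin_of_map_eq hσ hK hfix (hx ▸ mem_adjoin_simple_self ℂ _) hσx
  have hkℝ (r : ℝ) : algebraMap ℂ L r ∈ k := Subfield.subset_closure (Or.inl ⟨r, rfl⟩)
  have hle : ℂ⟮x⟯ ≤ adjoin ℂ (k : Set L) :=
    adjoin_simple_le_iff.2 (subset_adjoin ℂ _ (Subfield.subset_closure (Or.inr rfl)))
  refine le_antisymm (fun y hy => ?_) hkK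
  exact mem_of_mem_adjoin_of_map_eq hσ hkℝ (fun z hz => hfix z (hkK hz))
    (hle (hx ▸ subset_adjoin ℂ _ hy)) (hfix y hy)

end Fixed

end ConjugateLinear

section Laurent

/-- The ring `F[X, X⁻¹]` of Laurent polynomials, realised inside its fraction field `F(X)` as the
localization of `F[X]` at the powers of `X`. -/
noncomputable abbrev laurentSubalgebra (F : Type*) [Field F] : Subalgebra F[X] (RatFunc F) :=
  Localization.subalgebra.ofField (RatFunc F) (Submonoid.powers (X : F[X]))
    (powers_le_nonZeroDivisors_of_noZeroDivisors X_ne_zero)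

variable {F : Type*} [Field F] {R : RatFunc F}

theorem mem_laurentSubalgebra_iff : R ∈ laurentSubalgebra F ↔
    ∃ (P : F[X]) (m : ℕ), R = algebraMap F[X] (RatFunc F) P / RatFunc.X ^ m := by
  constructor
  · rintro ⟨P, _, ⟨m, rfl⟩, rfl⟩
    exact ⟨P, m, by simp [div_eq_mul_inv]⟩
  · rintro ⟨P, m, rfl⟩
    exact ⟨P, X ^ m, ⟨m, rfl⟩, by simp [div_eq_mul_inv]⟩

theorem mem_laurentSubalgebra_of_isIntegral (hR : IsIntegral (laurentSubalgebra F) R) :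
    R ∈ laurentSubalgebra F := by
  have : IsIntegrallyClosed (laurentSubalgebra F) :=
    isIntegrallyClosed_of_isLocalization _ (Submonoid.powers (X : F[X]))
      (powers_le_nonZeroDivisors_of_noZeroDivisors X_ne_zero)
  obtain ⟨S, rfl⟩ := IsIntegrallyClosed.isIntegral_iff.1 hR
  exact S.2

theorem C_mem_laurentSubalgebra (c : F) : RatFunc.C c ∈ laurentSubalgebra F := by
  simpa using algebraMap_mem (laurentSubalgebra F) (C c)

theorem exists_eq_C_mul_zpow_of_mem_laurentSubalgebra (hR0 : R ≠ 0)
    (hR : R ∈ laurentSubalgebra F) (hRinv : R⁻¹ ∈ laurentSubalgebra F) :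
    ∃ (a : F) (k : ℤ), a ≠ 0 ∧ R = RatFunc.C a * RatFunc.X ^ k := by
  obtain ⟨P, m, hP⟩ := mem_laurentSubalgebra_iff.1 hR
  obtain ⟨Q, l, hQ⟩ := mem_laurentSubalgebra_iff.1 hRinv
  have hX : (RatFunc.X : RatFunc F) ≠ 0 := RatFunc.X_ne_zero
  have hPQ : P * Q = X ^ (m + l) := by
    apply RatFunc.algebraMap_injective F
    have h := mul_inv_cancel₀ hR0
    rw [hQ, hP, div_mul_div_comm, ← pow_add, div_eq_one_iff_eq (pow_ne_zero _ hX)] at h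
    simpa using h
  obtain ⟨i, -, hi⟩ := (dvd_prime_pow prime_X _).1 ⟨Q, hPQ.symm⟩
  obtain ⟨u, hu⟩ := hi.symm
  obtain ⟨a, ha, hau⟩ := Polynomial.isUnit_iff.1 u.isUnit
  refine ⟨a, i - m, ha.ne_zero, ?_⟩
  rw [hP, ← hu, ← hau, map_mul, map_pow, RatFunc.algebraMap_X, RatFunc.algebraMap_C,
    zpow_sub₀ hX, zpow_natCast, zpow_natCast]
  ring

theorem adjoin_simple_X_zpow (k : ℤ) :
    F⟮(RatFunc.X ^ k : RatFunc F)⟯ = F⟮(RatFunc.X ^ k.natAbs : RatFunc F)⟯ := by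
  rcases Int.natAbs_eq k with h | h
  · rw [h, zpow_natCast, Int.natAbs_natCast]
  · rw [h, zpow_neg, zpow_natCast, Int.natAbs_neg, Int.natAbs_natCast]
    exact adjoin_simple_eq_of_moebius (a := 0) (b := 1) (c := 1) (d := 0) (by simp)
      (by simp [RatFunc.X_ne_zero])

theorem exists_adjoin_simple_eq_adjoin_X_pow (hR : R ∈ laurentSubalgebra F)
    (hRF : ¬ ∃ c : F, R = RatFunc.C c) {a : F} (ha : (R - RatFunc.C a)⁻¹ ∈ laurentSubalgebra F) :
    ∃ n : ℕ, n ≠ 0 ∧ F⟮R⟯ = F⟮(RatFunc.X ^ n : RatFunc F)⟯ := by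
  obtain ⟨c, k, hc, hk⟩ := exists_eq_C_mul_zpow_of_mem_laurentSubalgebra
    (fun h => hRF ⟨a, sub_eq_zero.1 h⟩) (sub_mem hR (C_mem_laurentSubalgebra a)) ha
  rw [sub_eq_iff_eq_add] at hk
  refine ⟨k.natAbs, ?_, ?_⟩
  · rw [Int.natAbs_ne_zero]
    rintro rfl
    exact hRF ⟨c + a, by rw [hk, zpow_zero, mul_one, map_add]⟩
  · rw [hk, ← adjoin_simple_X_zpow]
    exact adjoin_simple_mul_add hc a

theorem mem_algebraAdjoin_or_exists_inv_sub_mem_laurentSubalgebra [IsAlgClosed F]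
    {B : RatFunc F} (hB : B ∈ laurentSubalgebra F) (hBR : B ∈ F⟮R⟯) :
    B ∈ Algebra.adjoin F {R} ∨ ∃ a : F, (R - RatFunc.C a)⁻¹ ∈ laurentSubalgebra F :=
  (mem_algebraAdjoin_or_exists_isIntegral_inv_sub
    (b := (⟨B, hB⟩ : laurentSubalgebra F)) hBR).imp_right
    fun ⟨a, ha⟩ => ⟨a, mem_laurentSubalgebra_of_isIntegral ha⟩

theorem exists_mem_laurentSubalgebra_adjoin_simple_eq [IsAlgClosed F]
    {E : IntermediateField F (RatFunc F)} {B : RatFunc F} (hBE : B ∈ E)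
    (hB : B ∈ laurentSubalgebra F) (hBF : ¬ ∃ c : F, B = RatFunc.C c) :
    ∃ R ∈ laurentSubalgebra F, F⟮R⟯ = E := by
  rw [RatFunc.Luroth.eq_adjoin_generator (E := E)] at hBE ⊢
  obtain ⟨R, hR, hRE⟩ := exists_isIntegral_adjoin_simple_eq
    (b := (⟨B, hB⟩ : laurentSubalgebra F)) hBE hBF
  exact ⟨R, mem_laurentSubalgebra_of_isIntegral hR, hRE⟩

end Laurent

theorem adjoin_simple_Tn {n : ℕ} (hn : n ≠ 0) :
    ℂ⟮Tn n⟯ = ℂ⟮(RatFunc.X ^ n : RatFunc ℂ)⟯ := by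
  have hden : (RatFunc.X ^ n + 1 : RatFunc ℂ) ≠ 0 := by
    simpa using RatFunc.algebraMap_ne_zero (X_pow_add_C_ne_zero (Nat.pos_of_ne_zero hn) (1 : ℂ))
  refine adjoin_simple_eq_of_moebius (a := -Complex.I) (b := Complex.I) (c := 1) (d := 1) ?_ ?_
  · rw [mul_one, mul_one, ← neg_add', neg_ne_zero, ← two_mul]
    exact mul_ne_zero two_ne_zero Complex.I_ne_zero
  · simp only [Tn, RatFunc.algebraMap_eq_C, map_neg, map_one, one_mul, div_mul_cancel₀ _ hden]
    ring

section Conjugation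

variable {G : Type*} [FunLike G (RatFunc ℂ) (RatFunc ℂ)] [RingHomClass G (RatFunc ℂ) (RatFunc ℂ)]
  {σ : G} {R : RatFunc ℂ}
  (hσC : ∀ c : ℂ, σ (RatFunc.C c) = RatFunc.C (starRingEnd ℂ c))
  (hσX : σ RatFunc.X = RatFunc.X⁻¹)

include hσC hσX

theorem conj_Tn (n : ℕ) : σ (Tn n) = Tn n := by
  have hX : (RatFunc.X ^ n : RatFunc ℂ) ≠ 0 := pow_ne_zero n RatFunc.X_ne_zero
  simp only [Tn, map_div₀, map_mul, map_sub, map_add, map_pow, map_one, hσC, hσX, inv_pow]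
  rw [← mul_div_mul_right _ _ hX, mul_assoc, sub_mul, add_mul, inv_mul_cancel₀ hX, map_neg,
    Complex.conj_I, map_neg, map_neg]
  ring

theorem conj_conj (R : RatFunc ℂ) : σ (σ R) = R := by
  suffices h : (σ : RatFunc ℂ →+* RatFunc ℂ).comp σ = RingHom.id _ from
    RingHom.congr_fun h R
  refine IsFractionRing.ringHom_ext (A := ℂ[X]) (RingHom.congr_fun (Polynomial.ringHom_ext
    (f := ((σ : RatFunc ℂ →+* RatFunc ℂ).comp σ).comp (algebraMap ℂ[X] (RatFunc ℂ)))
    (g := algebraMap ℂ[X] (RatFunc ℂ)) (fun c => ?_) ?_))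
  · simp [hσC]
  · simp [hσX]

theorem conj_mem_laurentSubalgebra (hR : R ∈ laurentSubalgebra ℂ) :
    σ R ∈ laurentSubalgebra ℂ := by
  obtain ⟨P, m, rfl⟩ := mem_laurentSubalgebra_iff.1 hR
  have hX : RatFunc.X ∈ laurentSubalgebra ℂ :=
    RatFunc.algebraMap_X (K := ℂ) ▸ algebraMap_mem (laurentSubalgebra ℂ) X
  have hXinv : (RatFunc.X⁻¹ : RatFunc ℂ) ∈ laurentSubalgebra ℂ :=
    mem_laurentSubalgebra_iff.2 ⟨1, 1, by simp⟩
  have hP : algebraMap ℂ[X] (RatFunc ℂ) P ∈ Algebra.adjoin ℂ {RatFunc.X} := by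
    simpa using aeval_mem_adjoin_singleton ℂ (RatFunc.X : RatFunc ℂ) (p := P)
  have hσP := map_mem_algebraAdjoin_of_conj hσC hP
  rw [hσX] at hσP
  rw [map_div₀, map_pow, hσX, inv_pow, div_inv_eq_mul]
  exact mul_mem (Algebra.adjoin_le (S := (laurentSubalgebra ℂ).restrictScalars ℂ)
    (Set.singleton_subset_iff.2 hXinv) hσP) (pow_mem hX m)

theorem exists_conj_eq_adjoin_simple_eq (hR : R ∈ laurentSubalgebra ℂ)
    (hRC : ¬ ∃ c : ℂ, R = RatFunc.C c) (hσR : σ R ∈ ℂ⟮R⟯)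
    (hinv : ¬ ∃ a : ℂ, (R - RatFunc.C a)⁻¹ ∈ laurentSubalgebra ℂ) :
    ∃ S ∈ laurentSubalgebra ℂ, σ S = S ∧ ℂ⟮S⟯ = ℂ⟮R⟯ := by
  have hσσ : σ (σ R) = R := conj_conj hσC hσX R
  have hσR_poly : σ R ∈ Algebra.adjoin ℂ {R} :=
    (mem_algebraAdjoin_or_exists_inv_sub_mem_laurentSubalgebra
      (conj_mem_laurentSubalgebra hσC hσX hR) hσR).resolve_right hinv
  have hR_poly : R ∈ Algebra.adjoin ℂ {σ R} := by
    simpa only [hσσ] using map_mem_algebraAdjoin_of_conj hσC hσR_poly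
  obtain ⟨α, β, haff⟩ := exists_affine_of_mem_algebraAdjoin
    (RatFunc.transcendental_of_ne_C R hRC) hσR_poly hR_poly
  obtain ⟨a, b, ha, hfix⟩ := exists_map_affine_eq_of_map_eq_affine hσC hσσ haff
  exact ⟨_, add_mem (mul_mem (C_mem_laurentSubalgebra a) hR) (C_mem_laurentSubalgebra b), hfix,
    adjoin_simple_mul_add ha b⟩

theorem adjoin_simple_eq_Tn_or_exists_conj_eq {E : IntermediateField ℂ (RatFunc ℂ)}
    (hσE : ∀ x ∈ E, σ x ∈ E) {B : RatFunc ℂ} (hBE : B ∈ E) (hB : B ∈ laurentSubalgebra ℂ)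
    (hBC : ¬ ∃ c : ℂ, B = RatFunc.C c) :
    (∃ n : ℕ, n ≠ 0 ∧ E = ℂ⟮Tn n⟯) ∨ ∃ S ∈ laurentSubalgebra ℂ, σ S = S ∧ E = ℂ⟮S⟯ := by
  obtain ⟨R, hR, rfl⟩ := exists_mem_laurentSubalgebra_adjoin_simple_eq hBE hB hBC
  have hRC : ¬ ∃ c : ℂ, R = RatFunc.C c := fun h =>
    hBC (exists_eq_algebraMap_of_mem_adjoin_simple h hBE)
  by_cases hinv : ∃ a : ℂ, (R - RatFunc.C a)⁻¹ ∈ laurentSubalgebra ℂ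
  · obtain ⟨a, ha⟩ := hinv
    obtain ⟨n, hn, hRn⟩ := exists_adjoin_simple_eq_adjoin_X_pow hR hRC ha
    exact .inl ⟨n, hn, hRn.trans (adjoin_simple_Tn hn).symm⟩
  · obtain ⟨S, hS, hσS, hSR⟩ := exists_conj_eq_adjoin_simple_eq hσC hσX hR hRC
      (hσE R (mem_adjoin_simple_self ℂ R)) hinv
    exact .inr ⟨S, hS, hσS, hSR.symm⟩

end Conjugation

/-- Every subfield of `ℒ_ℝ(z)` containing `ℝ` and a nonconstant Laurent element
is generated over `ℝ` either by some `T_n`, or by a single nonconstant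
`σ`-invariant Laurent element. -/
theorem subfield_gen_by_Tn_or_laurent
    (σ : RatFunc ℂ ≃+* RatFunc ℂ)
    (hσC : ∀ c : ℂ, σ (RatFunc.C c) = RatFunc.C (starRingEnd ℂ c))
    (hσX : σ RatFunc.X = RatFunc.X⁻¹)
    (K : Subfield (RatFunc ℂ))
    (hKR : ∀ r : ℝ, RatFunc.C (r : ℂ) ∈ K)
    (hKfix : ∀ R ∈ K, σ R = R)
    (hKL : ∃ B ∈ K, IsLaurentRF B ∧ ¬ ∃ c : ℂ, B = RatFunc.C c) :
    (∃ n : ℕ, 1 ≤ n ∧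
      K = Subfield.closure
        (Set.range (fun r : ℝ => RatFunc.C (r : ℂ)) ∪ {Tn n})) ∨
    (∃ B : RatFunc ℂ, IsLaurentRF B ∧ σ B = B ∧ (¬ ∃ c : ℂ, B = RatFunc.C c) ∧
      K = Subfield.closure
        (Set.range (fun r : ℝ => RatFunc.C (r : ℂ)) ∪ {B})) := by
  obtain ⟨B, hBK, hB, hBC⟩ := hKL
  have hBE : B ∈ adjoin ℂ (K : Set (RatFunc ℂ)) := subset_adjoin ℂ _ hBK
  rcases adjoin_simple_eq_Tn_or_exists_conj_eq hσC hσX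
      (fun x => map_mem_adjoin_of_conj hσC hKR hKfix) hBE (mem_laurentSubalgebra_iff.2 hB) hBC with
    ⟨n, hn, hE⟩ | ⟨S, hS, hσS, hE⟩
  · exact .inl ⟨n, Nat.one_le_iff_ne_zero.2 hn,
      eq_closure_of_adjoin_eq_adjoin_simple hσC hKR hKfix (conj_Tn hσC hσX n) hE⟩
  · have hSC : ¬ ∃ c : ℂ, S = RatFunc.C c := fun h =>
      hBC (exists_eq_algebraMap_of_mem_adjoin_simple h (hE ▸ hBE))
    exact .inr ⟨S, mem_laurentSubalgebra_iff.1 hS, hσS, hSC,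
      eq_closure_of_adjoin_eq_adjoin_simple hσC hKR hKfix hσS hE⟩
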